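/- For every σ ∈ X_k^+, the absolute row sums of the Laplacian matrices are bounded by the normalization constants: Σ_{τ∈X_k^+} |(Δ_k^{up})_{τ,σ}| ≤ K^{up}, Σ_{τ∈X_k^+} |(Δ_k^{down})_{τ,σ}| ≤ K^{down}, and Σ_{τ∈X_k^+} |(Δ_k)_{τ,σ}| ≤ K. Consequently the operator norms satisfy ‖Δ_k^{up}‖ ≤ K^{up}, ‖Δ_k^{down}‖ ≤ K^{down}, and ‖Δ_k‖ ≤ K. -/

import Mathlib

open BigOperators Matrix Kronecker

attribute [local instance] Classical.propDecidable

noncomputable section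

namespace QWSC

/-- A finite abstract simplicial complex on the vertex set `Fin n`:
a family of vertex sets closed under taking subsets. -/
def IsComplex (n : ℕ) (X : Finset (Finset (Fin n))) : Prop :=
  ∀ s ∈ X, ∀ t ⊆ s, t ∈ X

/-- The weighted boundary operator `∂_k : C_k → C_{k-1}` written as a matrix in the
orthonormal chain bases (rows are indexed by `(k-1)`-simplices, columns by `k`-simplices;
a `k`-simplex has `k+1` vertices).  On the orthonormal basis vector of
`σ = {v_0 < … < v_k}` it has entries `(-1)^j w(v_j)` at the face `σ \ {v_j}`. -/
def boundary (n : ℕ) (X : Finset (Finset (Fin n))) (w : Fin n → ℝ) (k : ℕ) :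
    Matrix (Finset (Fin n)) (Finset (Fin n)) ℝ :=
  Matrix.of fun τ σ =>
    if σ ∈ X ∧ σ.card = k + 1 ∧ τ ⊆ σ ∧ τ.card = k then
      ∑ v ∈ σ \ τ, (-1 : ℝ) ^ ((σ.filter fun u => u < v).card) * w v
    else 0

/-- The weighted up Laplacian `Δ_k^{up} = ∂_{k+1} ∂_{k+1}^*`. -/
def upLap (n : ℕ) (X : Finset (Finset (Fin n))) (w : Fin n → ℝ) (k : ℕ) :
    Matrix (Finset (Fin n)) (Finset (Fin n)) ℝ :=
  boundary n X w (k + 1) * (boundary n X w (k + 1))ᵀ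

/-- The weighted down Laplacian `Δ_k^{down} = ∂_k^* ∂_k`. -/
def downLap (n : ℕ) (X : Finset (Finset (Fin n))) (w : Fin n → ℝ) (k : ℕ) :
    Matrix (Finset (Fin n)) (Finset (Fin n)) ℝ :=
  (boundary n X w k)ᵀ * boundary n X w k

/-- The weighted combinatorial Laplacian `Δ_k = Δ_k^{up} + Δ_k^{down}`. -/
def fullLap (n : ℕ) (X : Finset (Finset (Fin n))) (w : Fin n → ℝ) (k : ℕ) :
    Matrix (Finset (Fin n)) (Finset (Fin n)) ℝ :=
  upLap n X w k + downLap n X w k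

/-- `true` iff removing the vertex `v` from `σ` reverses the induced orientation,
i.e. the position of `v` in the increasing ordering of `σ` is odd. -/
def faceFlip (n : ℕ) (σ : Finset (Fin n)) (v : Fin n) : Bool :=
  decide ((σ.filter fun u => u < v).card % 2 = 1)

/-- An oriented simplex: a vertex set together with an orientation bit
(`false` = positively oriented, `true` = negatively oriented). -/
abbrev OSimp (n : ℕ) := Finset (Fin n) × Bool

/-- Up-adjacency `σ ∼↑ σ'` of oriented simplices: the vertex sets are distinct, their
union is a common coface belonging to `X`, and the orientations induced on the common
coface by `σ` and by `σ'` agree. -/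
def UpAdj (n : ℕ) (X : Finset (Finset (Fin n))) (σ σ' : OSimp n) : Prop :=
  σ.1 ≠ σ'.1 ∧ σ.1 ∪ σ'.1 ∈ X ∧ (σ.1 ∪ σ'.1).card = σ.1.card + 1 ∧
    σ'.1.card = σ.1.card ∧
    ∀ v ∈ σ'.1 \ σ.1, ∀ v' ∈ σ.1 \ σ'.1,
      xor σ.2 (faceFlip n (σ.1 ∪ σ'.1) v) = xor σ'.2 (faceFlip n (σ.1 ∪ σ'.1) v')

/-- Down-adjacency `σ ∼↓ σ'` of oriented simplices: the vertex sets are distinct, they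
share a common face (their intersection, of cardinality one less), and the orientations
induced on the common face by `σ` and by `σ'` agree. -/
def DownAdj (n : ℕ) (σ σ' : OSimp n) : Prop :=
  σ.1 ≠ σ'.1 ∧ (σ.1 ∩ σ'.1).card + 1 = σ.1.card ∧ σ'.1.card = σ.1.card ∧
    ∀ v ∈ σ.1 \ σ'.1, ∀ v' ∈ σ'.1 \ σ.1,
      xor σ.2 (faceFlip n σ.1 v) = xor σ'.2 (faceFlip n σ'.1 v')

/-- `up(σ)`: the vertices `u ∉ σ` with `σ ∪ {u} ∈ X`. -/
def upSet (n : ℕ) (X : Finset (Finset (Fin n))) (σ : Finset (Fin n)) : Finset (Fin n) :=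
  Finset.univ.filter fun u => u ∉ σ ∧ insert u σ ∈ X

/-- The set of `k`-simplices of `X` (those with `k+1` vertices). -/
def simplices (n : ℕ) (X : Finset (Finset (Fin n))) (k : ℕ) : Finset (Finset (Fin n)) :=
  X.filter fun s => s.card = k + 1

/-- Normalization constant `K^{up} = max_{σ∈X_k} Σ_{u∈V∖σ} Σ_{v∈σ∪{u}} w(u)w(v)`. -/
def Kup (n : ℕ) (X : Finset (Finset (Fin n))) (w : Fin n → ℝ) (k : ℕ) : ℝ :=
  sSup {x : ℝ | ∃ σ ∈ X, σ.card = k + 1 ∧ x = ∑ u ∈ σᶜ, ∑ v ∈ insert u σ, w u * w v}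

/-- Normalization constant `K^{down} = max_{σ∈X_k} Σ_{u∈σ} Σ_{v∈V∖(σ∖{u})} w(u)w(v)`. -/
def Kdown (n : ℕ) (X : Finset (Finset (Fin n))) (w : Fin n → ℝ) (k : ℕ) : ℝ :=
  sSup {x : ℝ | ∃ σ ∈ X, σ.card = k + 1 ∧ x = ∑ u ∈ σ, ∑ v ∈ (σ.erase u)ᶜ, w u * w v}

/-- Normalization constant `K = max_{σ∈X_k} (Σ_{v∈V} w(v)² + Σ_{u∈V∖σ} Σ_{v∈σ} w(u)w(v))`. -/
def Kfull (n : ℕ) (X : Finset (Finset (Fin n))) (w : Fin n → ℝ) (k : ℕ) : ℝ :=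
  sSup {x : ℝ | ∃ σ ∈ X, σ.card = k + 1 ∧
    x = (∑ v : Fin n, w v ^ 2) + ∑ u ∈ σᶜ, ∑ v ∈ σ, w u * w v}

/-- The `k`-th chain space `C_k`: the span of the basis vectors indexed by
`k`-simplices of `X`, inside the coordinate space of the orthonormal chain basis. -/
def chainSpace (n : ℕ) (X : Finset (Finset (Fin n))) (k : ℕ) :
    Submodule ℝ (Finset (Fin n) → ℝ) :=
  Submodule.span ℝ ((fun σ => Pi.single σ (1 : ℝ)) '' {σ | σ ∈ X ∧ σ.card = k + 1})

/-- The state space `S_k = X_k^± ∪ {Θ}` of the walks; `none` is the absorbing state `Θ`. -/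
abbrev SState (n : ℕ) := Option (OSimp n)

/-- A state is a member of `S_k`: either the absorbing state, or an oriented
`k`-simplex of `X`. -/
def valid (n : ℕ) (X : Finset (Finset (Fin n))) (k : ℕ) : SState n → Prop
  | none => True
  | some σ => σ.1 ∈ X ∧ σ.1.card = k + 1

/-- `η^{up}_σ = 1 − (1/K^{up}) Σ_{τ∈X_k^+} |(Δ_k^{up})_{τ,σ_+}|`. -/
def etaUp (n : ℕ) (X : Finset (Finset (Fin n))) (w : Fin n → ℝ) (k : ℕ) (σ : OSimp n) : ℝ :=
  1 - (∑ τ ∈ simplices n X k, |upLap n X w k τ σ.1|) / Kup n X w k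

/-- `η^{down}_σ = 1 − (1/K^{down}) Σ_{τ∈X_k^+} |(Δ_k^{down})_{τ,σ_+}|`. -/
def etaDown (n : ℕ) (X : Finset (Finset (Fin n))) (w : Fin n → ℝ) (k : ℕ) (σ : OSimp n) : ℝ :=
  1 - (∑ τ ∈ simplices n X k, |downLap n X w k τ σ.1|) / Kdown n X w k

/-- `η_σ = 1 − (1/K) Σ_{τ∈X_k^+} |(Δ_k)_{τ,σ_+}|`. -/
def etaFull (n : ℕ) (X : Finset (Finset (Fin n))) (w : Fin n → ℝ) (k : ℕ) (σ : OSimp n) : ℝ :=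
  1 - (∑ τ ∈ simplices n X k, |fullLap n X w k τ σ.1|) / Kfull n X w k

/-- The up-walk transition matrix `P^{up}` on `S_k`. -/
def Pup (n : ℕ) (X : Finset (Finset (Fin n))) (w : Fin n → ℝ) (k : ℕ) :
    SState n → SState n → ℝ
  | some σ, some σ' =>
      if σ.1 ∈ X ∧ σ.1.card = k + 1 ∧ σ'.1 ∈ X ∧ σ'.1.card = k + 1 then
        if σ = σ' then (∑ u ∈ upSet n X σ.1, w u ^ 2) / Kup n X w k
        else if UpAdj n X σ σ' then
          ((∑ v ∈ σ.1 \ σ'.1, w v) * (∑ v ∈ σ'.1 \ σ.1, w v)) / Kup n X w k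
        else 0
      else 0
  | some σ, none => if σ.1 ∈ X ∧ σ.1.card = k + 1 then etaUp n X w k σ else 0
  | none, none => 1
  | none, some _ => 0

/-- The down-walk transition matrix `P^{down}` on `S_k`. -/
def Pdown (n : ℕ) (X : Finset (Finset (Fin n))) (w : Fin n → ℝ) (k : ℕ) :
    SState n → SState n → ℝ
  | some σ, some σ' =>
      if σ.1 ∈ X ∧ σ.1.card = k + 1 ∧ σ'.1 ∈ X ∧ σ'.1.card = k + 1 then
        if σ = σ' then (∑ v ∈ σ.1, w v ^ 2) / Kdown n X w k
        else if DownAdj n σ σ' then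
          ((∑ v ∈ σ.1 \ σ'.1, w v) * (∑ v ∈ σ'.1 \ σ.1, w v)) / Kdown n X w k
        else 0
      else 0
  | some σ, none => if σ.1 ∈ X ∧ σ.1.card = k + 1 then etaDown n X w k σ else 0
  | none, none => 1
  | none, some _ => 0

/-- The harmonic-walk transition matrix `P` on `S_k`. -/
def Pharm (n : ℕ) (X : Finset (Finset (Fin n))) (w : Fin n → ℝ) (k : ℕ) :
    SState n → SState n → ℝ
  | some σ, some σ' =>
      if σ.1 ∈ X ∧ σ.1.card = k + 1 ∧ σ'.1 ∈ X ∧ σ'.1.card = k + 1 then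
        if σ = σ' then
          ((∑ u ∈ upSet n X σ.1, w u ^ 2) + ∑ v ∈ σ.1, w v ^ 2) / Kfull n X w k
        else if DownAdj n σ σ' ∧ ¬ UpAdj n X σ (σ'.1, !σ'.2) then
          ((∑ v ∈ σ.1 \ σ'.1, w v) * (∑ v ∈ σ'.1 \ σ.1, w v)) / Kfull n X w k
        else 0
      else 0
  | some σ, none => if σ.1 ∈ X ∧ σ.1.card = k + 1 then etaFull n X w k σ else 0
  | none, none => 1
  | none, some _ => 0

/-! ### Quantum encodings -/

/-- The computational basis of `(ℂ²)^{⊗(n+2)}`: `n` membership qubits, one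
orientation qubit, and one qubit flagging the absorbing state. -/
abbrev QIdx (n : ℕ) := (Fin n → Bool) × Bool × Bool

/-- The encoding of states of `S_k` as computational basis states:
`|σ⟩ = |x_σ⟩|s(σ)⟩|0⟩` and `|Θ⟩ = |0^n⟩|0⟩|1⟩`. -/
def encode (n : ℕ) : SState n → QIdx n
  | none => (fun _ => false, false, true)
  | some σ => (fun i => decide (i ∈ σ.1), σ.2, false)

/-- The all-zeros basis state `|0^{n+2}⟩`. -/
def zeroQ (n : ℕ) : QIdx n := (fun _ => false, false, false)

/-- The projector `Π_k^±` onto the span of the encoded oriented `k`-simplices of `X`. -/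
def PiPM (n : ℕ) (X : Finset (Finset (Fin n))) (k : ℕ) : Matrix (QIdx n) (QIdx n) ℂ :=
  Matrix.of fun p q =>
    if p = q ∧ ∃ σ : OSimp n, σ.1 ∈ X ∧ σ.1.card = k + 1 ∧ p = encode n (some σ) then 1 else 0

/-- The projector `Π_k` onto the span of the encoded positively oriented
`k`-simplices of `X`. -/
def PiK (n : ℕ) (X : Finset (Finset (Fin n))) (k : ℕ) : Matrix (QIdx n) (QIdx n) ℂ :=
  Matrix.of fun p q =>
    if p = q ∧ ∃ s ∈ X, s.card = k + 1 ∧ p = encode n (some (s, false)) then 1 else 0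

/-- Decode a basis state into the state of `S_k` it represents (if any). -/
def decodeQ (n : ℕ) : QIdx n → Option (SState n) := fun q =>
  if q.2.2 = false then some (some ((Finset.univ.filter fun i => q.1 i = true), q.2.1))
  else if q = encode n none then some none else none

/-- Identify a transition kernel `P` on `S_k` with the operator on `(ℂ²)^{⊗(n+2)}`
having `⟨σ'|P|σ⟩ = P_{σ,σ'}` for `σ, σ' ∈ S_k`, vanishing off the span of `S_k`. -/
def toQMat (n : ℕ) (P : SState n → SState n → ℝ) : Matrix (QIdx n) (QIdx n) ℂ :=
  Matrix.of fun q' q =>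
    match decodeQ n q, decodeQ n q' with
    | some σ, some σ' => (P σ σ' : ℂ)
    | _, _ => 0

/-- Identify a matrix indexed by vertex sets (acting on the chain space in the
orthonormal basis of positively oriented simplices) with an operator on
`(ℂ²)^{⊗(n+2)}` supported on the encoded positively oriented simplices. -/
def lapQ (n : ℕ) (L : Matrix (Finset (Fin n)) (Finset (Fin n)) ℝ) :
    Matrix (QIdx n) (QIdx n) ℂ :=
  Matrix.of fun q' q =>
    if q'.2.1 = false ∧ q'.2.2 = false ∧ q.2.1 = false ∧ q.2.2 = false then
      (L (Finset.univ.filter fun i => q'.1 i = true)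
         (Finset.univ.filter fun i => q.1 i = true) : ℂ)
    else 0

/-- The SWAP unitary exchanging the two `(n+2)`-qubit registers. -/
def swapMat (n : ℕ) : Matrix (QIdx n × QIdx n) (QIdx n × QIdx n) ℂ :=
  Matrix.of fun p q => if p.1 = q.2 ∧ p.2 = q.1 then 1 else 0

/-- The compression `(· ⊗ ⟨0^{n+2}|) W (· ⊗ |0^{n+2}⟩)` of an operator on two
`(n+2)`-qubit registers to the first register. -/
def compress (n : ℕ) (W : Matrix (QIdx n × QIdx n) (QIdx n × QIdx n) ℂ) :
    Matrix (QIdx n) (QIdx n) ℂ :=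
  Matrix.of fun q' q => W (q', zeroQ n) (q, zeroQ n)

/-- The compression `(· ⊗ ⟨0^α|) W (· ⊗ |0^α⟩)` of an operator on the system
register together with an `α`-qubit ancilla register. -/
def compressA (n α : ℕ) (W : Matrix (QIdx n × (Fin α → Bool)) (QIdx n × (Fin α → Bool)) ℂ) :
    Matrix (QIdx n) (QIdx n) ℂ :=
  Matrix.of fun q' q => W (q', fun _ => false) (q, fun _ => false)

/-- The gate `I^{⊗n} ⊗ (HZ) ⊗ I` acting on the orientation qubit, where `H` is the
Hadamard gate and `Z` the Pauli-Z gate. -/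
def hzGate (n : ℕ) : Matrix (QIdx n) (QIdx n) ℂ :=
  Matrix.of fun p q =>
    if p.1 = q.1 ∧ p.2.2 = q.2.2 then
      (if p.2.1 = false ∧ q.2.1 = true then -((Real.sqrt 2 : ℂ))⁻¹ else ((Real.sqrt 2 : ℂ))⁻¹)
    else 0

/-!
By the Schur test, the operator norm of a symmetric matrix is at most its largest absolute row sum.
The absolute row sum at `σ` is the largest value at `σ` of the Laplacian of a function `g` with
`|g| ≤ 1`. Applying `∂` sums over the vertices outside a simplex and applying `∂ᵀ` sums over the
vertices inside it, so `∂ ∂ᵀ` and `∂ᵀ ∂` are double sums over `u ∈ σᶜ`, `v ∈ insert u σ` and over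
`v ∈ σ`, `u ∈ (σ.erase v)ᶜ`, with terms of size at most `w u * w v`. In the full Laplacian the terms
with `u = v` add up to at most `∑ v, w v ^ 2`. For each exchange `σ ↦ insert u (σ.erase v)`
with `u ≠ v`, the up and down terms cancel by the opposite signs of the two orders of adding `u`
and `v`, unless `insert u σ` is missing from `X`; then only the down term is left.
-/

section SchurTest

variable {ι κ R 𝕜 : Type*} [Fintype ι] [Fintype κ] [RCLike 𝕜]

lemma sum_norm_mulVec_sq_le {A : Matrix ι κ 𝕜} {r c : ℝ} (hr : 0 ≤ r)
    (hrow : ∀ i, ∑ j, ‖A i j‖ ≤ r) (hcol : ∀ j, ∑ i, ‖A i j‖ ≤ c) (x : κ → 𝕜) :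
    ∑ i, ‖(A *ᵥ x) i‖ ^ 2 ≤ r * c * ∑ j, ‖x j‖ ^ 2 := by
  have cauchy_schwarz (i : ι) : ‖(A *ᵥ x) i‖ ^ 2 ≤ r * ∑ j, ‖A i j‖ * ‖x j‖ ^ 2 := calc
    ‖(A *ᵥ x) i‖ ^ 2 ≤ (∑ j, ‖A i j‖ * ‖x j‖) ^ 2 := by
      gcongr
      exact norm_sum_le_of_le _ fun j _ => norm_mul_le _ _
    _ ≤ (∑ j, ‖A i j‖) * ∑ j, ‖A i j‖ * ‖x j‖ ^ 2 :=
      Finset.sum_sq_le_sum_mul_sum_of_sq_le_mul _ (fun _ _ => by positivity)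
        (fun _ _ => by positivity) fun _ _ => le_of_eq (by ring)
    _ ≤ r * ∑ j, ‖A i j‖ * ‖x j‖ ^ 2 := by gcongr; exact hrow i
  calc ∑ i, ‖(A *ᵥ x) i‖ ^ 2 ≤ ∑ i, r * ∑ j, ‖A i j‖ * ‖x j‖ ^ 2 :=
        Finset.sum_le_sum fun i _ => cauchy_schwarz i
    _ = r * ∑ j, (∑ i, ‖A i j‖) * ‖x j‖ ^ 2 := by
      rw [← Finset.mul_sum, Finset.sum_comm]
      simp only [Finset.sum_mul]
    _ ≤ r * ∑ j, c * ‖x j‖ ^ 2 := by gcongr with j; exact hcol j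
    _ = r * c * ∑ j, ‖x j‖ ^ 2 := by rw [← Finset.mul_sum, mul_assoc]

theorem norm_toEuclideanLin_le_sqrt [DecidableEq κ] {A : Matrix ι κ 𝕜} {r c : ℝ} (hr : 0 ≤ r)
    (hrow : ∀ i, ∑ j, ‖A i j‖ ≤ r) (hcol : ∀ j, ∑ i, ‖A i j‖ ≤ c) :
    ‖LinearMap.toContinuousLinearMap (Matrix.toEuclideanLin A)‖ ≤ √(r * c) := by
  refine ContinuousLinearMap.opNorm_le_bound _ (Real.sqrt_nonneg _) fun x => ?_
  rw [EuclideanSpace.norm_eq, EuclideanSpace.norm_eq, ← Real.sqrt_mul' _ (by positivity)]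
  exact Real.sqrt_le_sqrt (sum_norm_mulVec_sq_le hr hrow hcol x.ofLp)

theorem norm_toEuclideanLin_le_of_isSymm [DecidableEq ι] {A : Matrix ι ι 𝕜} {S : Finset ι} {r : ℝ}
    (hA : A.IsSymm) (hS : S.Nonempty) (hsupp : ∀ i ∉ S, ∀ j, A i j = 0)
    (hsum : ∀ j ∈ S, ∑ i ∈ S, ‖A i j‖ ≤ r) :
    ‖LinearMap.toContinuousLinearMap (Matrix.toEuclideanLin A)‖ ≤ r := by
  have hr : 0 ≤ r := by
    obtain ⟨j, hj⟩ := hS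
    exact (Finset.sum_nonneg fun _ _ => norm_nonneg _).trans (hsum j hj)
  have hcol (j : ι) : ∑ i, ‖A i j‖ ≤ r := by
    by_cases hj : j ∈ S
    · refine le_of_eq_of_le (Finset.sum_subset (Finset.subset_univ S) fun i _ hi => ?_).symm
        (hsum j hj)
      rw [hsupp i hi, norm_zero]
    · rw [Finset.sum_eq_zero fun i _ => by rw [hA.apply j i, hsupp j hj, norm_zero]]
      exact hr
  have hrow (i : ι) : ∑ j, ‖A i j‖ ≤ r := by simpa only [hA.apply] using hcol i
  simpa only [Real.sqrt_mul_self hr] using norm_toEuclideanLin_le_sqrt hr hrow hcol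

lemma sum_abs_le_of_forall_abs_mulVec_le [Ring R] [LinearOrder R] [IsOrderedRing R]
    {A : Matrix ι ι R} {j : ι} {c : R} (hA : A.IsSymm) (S : Finset ι)
    (h : ∀ g : ι → R, (∀ i, |g i| ≤ 1) → |(A *ᵥ g) j| ≤ c) : ∑ i ∈ S, |A i j| ≤ c := by
  have exists_sign (i : ι) : ∃ ε : R, |ε| ≤ 1 ∧ A j i * ε = |A i j| := by
    rw [hA.apply i j]
    rcases abs_choice (A i j) with h | h
    · exact ⟨1, by rw [abs_one], by rw [h, mul_one]⟩
    · exact ⟨-1, by rw [abs_neg, abs_one], by rw [h, mul_neg_one]⟩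
  choose g hg hAg using exists_sign
  calc ∑ i ∈ S, |A i j| ≤ ∑ i, |A i j| :=
        Finset.sum_le_univ_sum_of_nonneg fun _ => abs_nonneg _
    _ = (A *ᵥ g) j := Finset.sum_congr rfl fun i _ => (hAg i).symm
    _ ≤ c := (le_abs_self _).trans (h g hg)

end SchurTest

section Covers

variable {α M : Type*} [Fintype α] [DecidableEq α] [AddCommMonoid M] {f : Finset α → M}

lemma sum_eq_sum_insert {s : Finset α} (hf : ∀ t, ¬ s ⋖ t → f t = 0) :
    ∑ t, f t = ∑ u ∈ sᶜ, f (insert u s) := by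
  rw [← Finset.sum_image (Finset.insert_inj_on' s)]
  refine (Finset.sum_subset (Finset.subset_univ _) fun t _ ht => hf t fun hst => ht ?_).symm
  obtain ⟨u, hu, rfl⟩ := Finset.covBy_iff_exists_insert.1 hst
  exact Finset.mem_image_of_mem _ (Finset.mem_compl.2 hu)

lemma sum_eq_sum_erase {t : Finset α} (hf : ∀ s, ¬ s ⋖ t → f s = 0) :
    ∑ s, f s = ∑ v ∈ t, f (t.erase v) := by
  rw [← Finset.sum_image (Finset.erase_injOn t)]
  refine (Finset.sum_subset (Finset.subset_univ _) fun s _ hs => hf s fun hst => hs ?_).symm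
  obtain ⟨v, hv, rfl⟩ := Finset.covBy_iff_exists_erase.1 hst
  exact Finset.mem_image_of_mem _ hv

end Covers

section Sign

variable {α : Type*} [Preorder α] [DecidableLT α]

/-- The incidence sign `(-1)^j` of the face of a simplex opposite its vertex `v`, where `j` is the
number of vertices smaller than `v`. Whether `s` is taken with or without `v` is immaterial. -/
def incidenceSign (s : Finset α) (v : α) : ℝ := (-1) ^ (s.filter fun u => u < v).card

lemma abs_incidenceSign (s : Finset α) (v : α) : |incidenceSign s v| = 1 :=
  abs_neg_one_pow (α := ℝ) _

lemma incidenceSign_insert [DecidableEq α] {s : Finset α} {u : α} (hu : u ∉ s) (v : α) :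
    incidenceSign (insert u s) v = if u < v then -incidenceSign s v else incidenceSign s v := by
  unfold incidenceSign
  rw [Finset.filter_insert]
  split_ifs
  · rw [Finset.card_insert_of_notMem fun h => hu (Finset.mem_of_mem_filter u h), pow_succ,
      mul_neg_one]
  · rfl

lemma incidenceSign_insert_mul_add [DecidableEq α] {s : Finset α} {u v : α} (hu : u ∉ s)
    (hv : v ∉ s) (huv : u < v ∨ v < u) :
    incidenceSign (insert v s) u * incidenceSign (insert u s) v
      + incidenceSign s v * incidenceSign s u = 0 := by
  rw [incidenceSign_insert hv, incidenceSign_insert hu]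
  rcases huv with h | h
  · rw [if_neg h.not_gt, if_pos h]; ring
  · rw [if_pos h, if_neg h.not_gt]; ring

end Sign

section Laplacian

variable {n k : ℕ} {X : Finset (Finset (Fin n))} {w : Fin n → ℝ} {s t σ τ : Finset (Fin n)}
  {u v : Fin n} {f g : Finset (Fin n) → ℝ}

lemma boundary_insert (hu : u ∉ s) :
    boundary n X w k s (insert u s) =
      if insert u s ∈ X ∧ s.card = k then incidenceSign s u * w u else 0 := by
  simp [boundary, incidenceSign, Finset.insert_sdiff_cancel hu, Finset.card_insert_of_notMem hu,
    Finset.filter_insert]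

lemma of_boundary_ne_zero (h : boundary n X w k s t ≠ 0) :
    t ∈ simplices n X k ∧ s ⊆ t ∧ s.card = k := by
  simp only [boundary, Matrix.of_apply, ne_eq, ite_eq_right_iff, Classical.not_imp] at h
  obtain ⟨⟨htX, ht, hst, hs⟩, -⟩ := h
  exact ⟨Finset.mem_filter.2 ⟨htX, ht⟩, hst, hs⟩

lemma boundary_eq_zero_of_not_covBy (h : ¬ s ⋖ t) : boundary n X w k s t = 0 := by
  contrapose! h
  obtain ⟨ht, hst, hs⟩ := of_boundary_ne_zero h
  refine Finset.covBy_iff_card_sdiff_eq_one.2 ⟨hst, ?_⟩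
  rw [Finset.card_sdiff_of_subset hst, (Finset.mem_filter.1 ht).2, hs, Nat.add_sub_cancel_left]

lemma boundary_eq_zero_of_notMem_simplices (ht : t ∉ simplices n X k) :
    boundary n X w k s t = 0 :=
  not_not.1 fun h => ht (of_boundary_ne_zero h).1

lemma boundary_succ_eq_zero_of_notMem_simplices (hX : IsComplex n X) (hs : s ∉ simplices n X k) :
    boundary n X w (k + 1) s t = 0 := by
  contrapose! hs
  obtain ⟨ht, hst, hs⟩ := of_boundary_ne_zero hs
  exact Finset.mem_filter.2 ⟨hX t (Finset.mem_filter.1 ht).1 s hst, hs⟩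

lemma boundary_mulVec_apply (g : Finset (Fin n) → ℝ) (s : Finset (Fin n)) :
    (boundary n X w k *ᵥ g) s = ∑ u ∈ sᶜ, boundary n X w k s (insert u s) * g (insert u s) :=
  sum_eq_sum_insert (f := fun t => boundary n X w k s t * g t) fun t hst => by
    rw [boundary_eq_zero_of_not_covBy hst, zero_mul]

lemma boundary_transpose_mulVec_apply (g : Finset (Fin n) → ℝ) (t : Finset (Fin n)) :
    ((boundary n X w k)ᵀ *ᵥ g) t = ∑ v ∈ t, boundary n X w k (t.erase v) t * g (t.erase v) :=
  sum_eq_sum_erase (f := fun s => boundary n X w k s t * g s) fun s hst => by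
    rw [boundary_eq_zero_of_not_covBy hst, zero_mul]

lemma abs_boundary_insert_le (hw : ∀ v, 0 ≤ w v) (hu : u ∉ s) :
    |boundary n X w k s (insert u s)| ≤ w u := by
  rw [boundary_insert hu]
  split_ifs
  · rw [abs_mul, abs_incidenceSign, one_mul, abs_of_nonneg (hw u)]
  · rw [abs_zero]; exact hw u

lemma abs_boundary_erase_le (hw : ∀ v, 0 ≤ w v) (hv : v ∈ t) :
    |boundary n X w k (t.erase v) t| ≤ w v := by
  simpa only [Finset.insert_erase hv] using
    abs_boundary_insert_le (X := X) (k := k) hw (Finset.notMem_erase v t)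

lemma abs_boundary_mulVec_le (hw : ∀ v, 0 ≤ w v)
    (hg : ∀ u ∈ sᶜ, |g (insert u s)| ≤ f (insert u s)) :
    |(boundary n X w k *ᵥ g) s| ≤ ∑ u ∈ sᶜ, w u * f (insert u s) := by
  rw [boundary_mulVec_apply]
  refine Finset.abs_sum_le_sum_abs _ _ |>.trans (Finset.sum_le_sum fun u hu => ?_)
  rw [abs_mul]
  exact mul_le_mul (abs_boundary_insert_le hw (Finset.mem_compl.1 hu)) (hg u hu) (abs_nonneg _)
    (hw u)

lemma abs_boundary_transpose_mulVec_le (hw : ∀ v, 0 ≤ w v)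
    (hg : ∀ v ∈ t, |g (t.erase v)| ≤ f (t.erase v)) :
    |((boundary n X w k)ᵀ *ᵥ g) t| ≤ ∑ v ∈ t, w v * f (t.erase v) := by
  rw [boundary_transpose_mulVec_apply]
  refine Finset.abs_sum_le_sum_abs _ _ |>.trans (Finset.sum_le_sum fun v hv => ?_)
  rw [abs_mul]
  exact mul_le_mul (abs_boundary_erase_le hw hv) (hg v hv) (abs_nonneg _) (hw v)

lemma upLap_mulVec (g : Finset (Fin n) → ℝ) :
    upLap n X w k *ᵥ g = boundary n X w (k + 1) *ᵥ ((boundary n X w (k + 1))ᵀ *ᵥ g) :=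
  (Matrix.mulVec_mulVec ..).symm

lemma downLap_mulVec (g : Finset (Fin n) → ℝ) :
    downLap n X w k *ᵥ g = (boundary n X w k)ᵀ *ᵥ (boundary n X w k *ᵥ g) :=
  (Matrix.mulVec_mulVec ..).symm

lemma abs_upLap_mulVec_le (hw : ∀ v, 0 ≤ w v) (hg : ∀ τ, |g τ| ≤ 1) :
    |(upLap n X w k *ᵥ g) σ| ≤ ∑ u ∈ σᶜ, ∑ v ∈ insert u σ, w u * w v := by
  have hcobdry (ρ : Finset (Fin n)) :
      |((boundary n X w (k + 1))ᵀ *ᵥ g) ρ| ≤ ∑ v ∈ ρ, w v * 1 :=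
    abs_boundary_transpose_mulVec_le (f := fun _ => 1) hw fun v _ => hg _
  rw [upLap_mulVec]
  simpa only [mul_one, Finset.mul_sum] using
    abs_boundary_mulVec_le (f := fun ρ => ∑ v ∈ ρ, w v * 1) hw fun u _ => hcobdry _

lemma abs_downLap_mulVec_le (hw : ∀ v, 0 ≤ w v) (hg : ∀ τ, |g τ| ≤ 1) :
    |(downLap n X w k *ᵥ g) σ| ≤ ∑ u ∈ σ, ∑ v ∈ (σ.erase u)ᶜ, w u * w v := by
  have hbdry (ρ : Finset (Fin n)) : |(boundary n X w k *ᵥ g) ρ| ≤ ∑ u ∈ ρᶜ, w u * 1 :=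
    abs_boundary_mulVec_le (f := fun _ => 1) hw fun u _ => hg _
  rw [downLap_mulVec]
  simpa only [mul_one, Finset.mul_sum] using
    abs_boundary_transpose_mulVec_le (f := fun ρ => ∑ u ∈ ρᶜ, w u * 1) hw fun v _ => hbdry _

/-- The diagonal coefficient of the full Laplacian at `σ`: its first sum comes from `upLap`, its
second from `downLap`. -/
def diagCoeff (n : ℕ) (X : Finset (Finset (Fin n))) (w : Fin n → ℝ) (k : ℕ)
    (σ : Finset (Fin n)) : ℝ :=
  ∑ u ∈ σᶜ, boundary n X w (k + 1) σ (insert u σ) ^ 2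
    + ∑ v ∈ σ, boundary n X w k (σ.erase v) σ ^ 2

/-- The coefficient in the full Laplacian of the exchange `σ ↦ insert u (σ.erase v)`, for `u ∉ σ`
and `v ∈ σ`: its first product passes through the coface `insert u σ`, its second through the face
`σ.erase v`. -/
def exchangeCoeff (n : ℕ) (X : Finset (Finset (Fin n))) (w : Fin n → ℝ) (k : ℕ)
    (σ : Finset (Fin n)) (u v : Fin n) : ℝ :=
  boundary n X w (k + 1) σ (insert u σ)
      * boundary n X w (k + 1) (insert u (σ.erase v)) (insert u σ)
    + boundary n X w k (σ.erase v) σ * boundary n X w k (σ.erase v) (insert u (σ.erase v))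

lemma upLap_mulVec_apply (g : Finset (Fin n) → ℝ) (σ : Finset (Fin n)) :
    (upLap n X w k *ᵥ g) σ =
      (∑ u ∈ σᶜ, boundary n X w (k + 1) σ (insert u σ) ^ 2) * g σ
        + ∑ u ∈ σᶜ, ∑ v ∈ σ, boundary n X w (k + 1) σ (insert u σ)
            * boundary n X w (k + 1) (insert u (σ.erase v)) (insert u σ)
            * g (insert u (σ.erase v)) := by
  rw [upLap_mulVec, boundary_mulVec_apply, Finset.sum_mul, ← Finset.sum_add_distrib]
  refine Finset.sum_congr rfl fun u hu => ?_
  have hu : u ∉ σ := Finset.mem_compl.1 hu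
  rw [boundary_transpose_mulVec_apply, Finset.sum_insert hu, Finset.erase_insert hu, mul_add,
    Finset.mul_sum, ← mul_assoc, sq]
  refine congrArg _ (Finset.sum_congr rfl fun v hv => ?_)
  rw [Finset.erase_insert_of_ne (ne_of_mem_of_not_mem hv hu).symm, mul_assoc]

lemma downLap_mulVec_apply (g : Finset (Fin n) → ℝ) (σ : Finset (Fin n)) :
    (downLap n X w k *ᵥ g) σ =
      (∑ v ∈ σ, boundary n X w k (σ.erase v) σ ^ 2) * g σ
        + ∑ u ∈ σᶜ, ∑ v ∈ σ, boundary n X w k (σ.erase v) σ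
            * boundary n X w k (σ.erase v) (insert u (σ.erase v))
            * g (insert u (σ.erase v)) := by
  rw [downLap_mulVec, boundary_transpose_mulVec_apply, Finset.sum_mul, Finset.sum_comm,
    ← Finset.sum_add_distrib]
  refine Finset.sum_congr rfl fun v hv => ?_
  rw [boundary_mulVec_apply, Finset.compl_erase,
    Finset.sum_insert (Finset.notMem_compl.2 hv), Finset.insert_erase hv, mul_add,
    Finset.mul_sum, ← mul_assoc, sq]
  exact congrArg _ (Finset.sum_congr rfl fun u _ => (mul_assoc ..).symm)

lemma fullLap_mulVec_apply (g : Finset (Fin n) → ℝ) (σ : Finset (Fin n)) :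
    (fullLap n X w k *ᵥ g) σ =
      diagCoeff n X w k σ * g σ
        + ∑ u ∈ σᶜ, ∑ v ∈ σ, exchangeCoeff n X w k σ u v * g (insert u (σ.erase v)) := by
  rw [fullLap, Matrix.add_mulVec, Pi.add_apply, upLap_mulVec_apply, downLap_mulVec_apply]
  simp only [diagCoeff, exchangeCoeff, add_mul, Finset.sum_add_distrib]
  ring

lemma abs_diagCoeff_le (hw : ∀ v, 0 ≤ w v) : |diagCoeff n X w k σ| ≤ ∑ v, w v ^ 2 := by
  rw [diagCoeff, abs_of_nonneg (by positivity), ← Finset.sum_compl_add_sum σ]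
  refine add_le_add (Finset.sum_le_sum fun u hu => ?_) (Finset.sum_le_sum fun v hv => ?_)
  · exact sq_le_sq.2 ((abs_boundary_insert_le hw (Finset.mem_compl.1 hu)).trans (le_abs_self _))
  · exact sq_le_sq.2 ((abs_boundary_erase_le hw hv).trans (le_abs_self _))

lemma exchangeCoeff_eq_zero (hX : IsComplex n X) (hσ : σ ∈ simplices n X k) (hu : u ∉ σ)
    (hv : v ∈ σ) (hcoface : insert u σ ∈ X) : exchangeCoeff n X w k σ u v = 0 := by
  obtain ⟨s, hvs, rfl⟩ : ∃ s, v ∉ s ∧ insert v s = σ :=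
    ⟨σ.erase v, Finset.notMem_erase v σ, Finset.insert_erase hv⟩
  obtain ⟨huv, hus⟩ : u ≠ v ∧ u ∉ s := by simpa only [Finset.mem_insert, not_or] using hu
  have hvus : v ∉ insert u s := by simp only [Finset.mem_insert, huv.symm, hvs, or_self,
    not_false_eq_true]
  obtain ⟨hσX, hσ⟩ := Finset.mem_filter.1 hσ
  have hs : s.card = k := by simpa only [Finset.card_insert_of_notMem hvs, add_left_inj] using hσ
  have hus_card : (insert u s).card = k + 1 := by rw [Finset.card_insert_of_notMem hus, hs]
  have husX : insert u s ∈ X :=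
    hX _ hcoface _ (Finset.insert_subset_insert u (Finset.subset_insert v s))
  have hup := boundary_insert (X := X) (w := w) (k := k + 1) hvus
  rw [Finset.insert_comm] at hup
  rw [exchangeCoeff, Finset.erase_insert hvs, hup, boundary_insert hu, boundary_insert hvs,
    boundary_insert hus, if_pos ⟨hcoface, hσ⟩, if_pos ⟨hcoface, hus_card⟩, if_pos ⟨hσX, hs⟩,
    if_pos ⟨husX, hs⟩]
  linear_combination w u * w v * incidenceSign_insert_mul_add hus hvs huv.lt_or_gt

lemma abs_exchangeCoeff_le (hX : IsComplex n X) (hw : ∀ v, 0 ≤ w v) (hσ : σ ∈ simplices n X k)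
    (hu : u ∉ σ) (hv : v ∈ σ) : |exchangeCoeff n X w k σ u v| ≤ w u * w v := by
  by_cases hcoface : insert u σ ∈ X
  · rw [exchangeCoeff_eq_zero hX hσ hu hv hcoface, abs_zero]
    exact mul_nonneg (hw u) (hw v)
  · have hup : boundary n X w (k + 1) σ (insert u σ) = 0 :=
      boundary_eq_zero_of_notMem_simplices fun h => hcoface (Finset.mem_filter.1 h).1
    rw [exchangeCoeff, hup, zero_mul, zero_add, abs_mul, mul_comm (w u)]
    exact mul_le_mul (abs_boundary_erase_le hw hv)
      (abs_boundary_insert_le hw fun h => hu (Finset.mem_of_mem_erase h)) (abs_nonneg _) (hw v)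

lemma abs_fullLap_mulVec_le (hX : IsComplex n X) (hw : ∀ v, 0 ≤ w v) (hσ : σ ∈ simplices n X k)
    (hg : ∀ τ, |g τ| ≤ 1) :
    |(fullLap n X w k *ᵥ g) σ| ≤ ∑ v, w v ^ 2 + ∑ u ∈ σᶜ, ∑ v ∈ σ, w u * w v := by
  have abs_mul_g_le {a b : ℝ} (τ : Finset (Fin n)) (h : |a| ≤ b) : |a * g τ| ≤ b := by
    rw [abs_mul]
    exact (mul_le_of_le_one_right (abs_nonneg a) (hg τ)).trans h
  rw [fullLap_mulVec_apply]
  refine (abs_add_le _ _).trans (add_le_add (abs_mul_g_le σ (abs_diagCoeff_le hw)) ?_)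
  refine norm_sum_le_of_le σᶜ fun u hu => norm_sum_le_of_le (E := ℝ) σ fun v hv => ?_
  exact abs_mul_g_le _ (abs_exchangeCoeff_le hX hw hσ (Finset.mem_compl.1 hu) hv)

lemma isSymm_upLap : (upLap n X w k).IsSymm :=
  Matrix.isSymm_mul_transpose_self _

lemma isSymm_downLap : (downLap n X w k).IsSymm :=
  Matrix.isSymm_transpose_mul_self _

lemma isSymm_fullLap : (fullLap n X w k).IsSymm :=
  isSymm_upLap.add isSymm_downLap

lemma upLap_eq_zero_of_notMem_simplices (hX : IsComplex n X) (hσ : σ ∉ simplices n X k) :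
    upLap n X w k σ τ = 0 :=
  Matrix.mul_apply.trans <| Finset.sum_eq_zero fun _ _ => by
    rw [boundary_succ_eq_zero_of_notMem_simplices hX hσ, zero_mul]

lemma downLap_eq_zero_of_notMem_simplices (hσ : σ ∉ simplices n X k) :
    downLap n X w k σ τ = 0 :=
  Matrix.mul_apply.trans <| Finset.sum_eq_zero fun _ _ => by
    rw [Matrix.transpose_apply, boundary_eq_zero_of_notMem_simplices hσ, zero_mul]

lemma fullLap_eq_zero_of_notMem_simplices (hX : IsComplex n X) (hσ : σ ∉ simplices n X k) :
    fullLap n X w k σ τ = 0 := by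
  rw [fullLap, Matrix.add_apply, upLap_eq_zero_of_notMem_simplices hX hσ,
    downLap_eq_zero_of_notMem_simplices hσ, add_zero]

lemma le_sSup_simplices (F : Finset (Fin n) → ℝ) (hσ : σ ∈ simplices n X k) :
    F σ ≤ sSup {x : ℝ | ∃ σ ∈ X, σ.card = k + 1 ∧ x = F σ} := by
  obtain ⟨hσX, hσ⟩ := Finset.mem_filter.1 hσ
  refine le_csSup (((Set.finite_range F).subset ?_).bddAbove) ⟨σ, hσX, hσ, rfl⟩
  rintro _ ⟨τ, -, -, rfl⟩
  exact Set.mem_range_self τ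

theorem sum_abs_upLap_le_Kup (hw : ∀ v, 0 ≤ w v) (hσ : σ ∈ simplices n X k) :
    ∑ τ ∈ simplices n X k, |upLap n X w k τ σ| ≤ Kup n X w k :=
  (sum_abs_le_of_forall_abs_mulVec_le isSymm_upLap _ fun _ => abs_upLap_mulVec_le hw).trans
    (le_sSup_simplices (fun σ => ∑ u ∈ σᶜ, ∑ v ∈ insert u σ, w u * w v) hσ)

theorem sum_abs_downLap_le_Kdown (hw : ∀ v, 0 ≤ w v) (hσ : σ ∈ simplices n X k) :
    ∑ τ ∈ simplices n X k, |downLap n X w k τ σ| ≤ Kdown n X w k :=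
  (sum_abs_le_of_forall_abs_mulVec_le isSymm_downLap _ fun _ => abs_downLap_mulVec_le hw).trans
    (le_sSup_simplices (fun σ => ∑ u ∈ σ, ∑ v ∈ (σ.erase u)ᶜ, w u * w v) hσ)

theorem sum_abs_fullLap_le_Kfull (hX : IsComplex n X) (hw : ∀ v, 0 ≤ w v)
    (hσ : σ ∈ simplices n X k) :
    ∑ τ ∈ simplices n X k, |fullLap n X w k τ σ| ≤ Kfull n X w k :=
  (sum_abs_le_of_forall_abs_mulVec_le isSymm_fullLap _ fun _ =>
    abs_fullLap_mulVec_le hX hw hσ).trans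
    (le_sSup_simplices (fun σ => ∑ v, w v ^ 2 + ∑ u ∈ σᶜ, ∑ v ∈ σ, w u * w v) hσ)

end Laplacian

/-- The absolute row sums of the Laplacian matrices are bounded by the
normalization constants `K^{up}`, `K^{down}`, `K`, and consequently so are the operator
norms of the Laplacians. -/
theorem laplacian_row_sums_and_norms (n k : ℕ) (X : Finset (Finset (Fin n)))
    (hX : IsComplex n X) (w : Fin n → ℝ) (hw : ∀ v, 0 < w v)
    (hne : (simplices n X k).Nonempty) :
    (∀ σ ∈ simplices n X k,
      (∑ τ ∈ simplices n X k, |upLap n X w k τ σ|) ≤ Kup n X w k ∧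
      (∑ τ ∈ simplices n X k, |downLap n X w k τ σ|) ≤ Kdown n X w k ∧
      (∑ τ ∈ simplices n X k, |fullLap n X w k τ σ|) ≤ Kfull n X w k) ∧
    ‖LinearMap.toContinuousLinearMap (Matrix.toEuclideanLin (upLap n X w k))‖
      ≤ Kup n X w k ∧
    ‖LinearMap.toContinuousLinearMap (Matrix.toEuclideanLin (downLap n X w k))‖
      ≤ Kdown n X w k ∧
    ‖LinearMap.toContinuousLinearMap (Matrix.toEuclideanLin (fullLap n X w k))‖
      ≤ Kfull n X w k := by
  have hw₀ (v : Fin n) : 0 ≤ w v := (hw v).le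
  refine ⟨fun σ hσ => ⟨sum_abs_upLap_le_Kup hw₀ hσ, sum_abs_downLap_le_Kdown hw₀ hσ,
    sum_abs_fullLap_le_Kfull hX hw₀ hσ⟩, ?_, ?_, ?_⟩
  · exact norm_toEuclideanLin_le_of_isSymm isSymm_upLap hne
      (fun _ hσ _ => upLap_eq_zero_of_notMem_simplices hX hσ)
      fun _ => sum_abs_upLap_le_Kup hw₀
  · exact norm_toEuclideanLin_le_of_isSymm isSymm_downLap hne
      (fun _ hσ _ => downLap_eq_zero_of_notMem_simplices hσ)
      fun _ => sum_abs_downLap_le_Kdown hw₀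
  · exact norm_toEuclideanLin_le_of_isSymm isSymm_fullLap hne
      (fun _ hσ _ => fullLap_eq_zero_of_notMem_simplices hX hσ)
      fun _ => sum_abs_fullLap_le_Kfull hX hw₀

end QWSC
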